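/- Let A, B ⊆ F_p be finite and nonempty, let a₀ ∈ A satisfy Σ_{a∈A}|aB ∩ a₀B| ≥ |A||B|²/|AB|, and for each j ≤ ⌈log₂|B|⌉ let A_j = {a ∈ A : 2^{j−1} < |aB ∩ a₀B| ≤ 2^j}. If |A_j| ≤ p^{1/2}, then 16^j|A_j|³ ≤ C·|A+B|^{10}/(|A|³|B|) for an absolute constant C; if instead (A_j−A_j)/(A_j−A_j) = F_p, then 16^j·min{|A_j|², p} ≤ C·|A+B|⁸/|A|³. -/

import Mathlib

open Finset Pointwise

/-- The set of ratios `(a - b) / (c - d)` with `a, b, c, d ∈ A` and `c ≠ d`. -/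
def ratioSet {p : ℕ} [Fact p.Prime] (A : Finset (ZMod p)) : Set (ZMod p) :=
  {x | ∃ a ∈ A, ∃ b ∈ A, ∃ c ∈ A, ∃ d ∈ A, c ≠ d ∧ x = (a - b) / (c - d)}

section Plunnecke
variable {G : Type*} [AddCommGroup G] [DecidableEq G]

theorem exists_subset_minimizing_card_add {X : Finset G} (hX : X.Nonempty) (Y : Finset G) :
    ∃ U ⊆ X, U.Nonempty ∧ #(U + Y) * #X ≤ #(X + Y) * #U ∧
      ∀ V ⊆ U, #(U + Y) * #V ≤ #(V + Y) * #U := by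
  have hX' : X ∈ X.powerset.erase ∅ := by simp [hX.ne_empty]
  obtain ⟨U, hU, hmin⟩ :=
    exists_min_image (X.powerset.erase ∅) (fun U ↦ (#(U + Y) / #U : ℚ≥0)) ⟨X, hX'⟩
  rw [mem_erase, mem_powerset, ← nonempty_iff_ne_empty] at hU
  have key : ∀ V ⊆ X, V.Nonempty → #(U + Y) * #V ≤ #(V + Y) * #U := by
    intro V hV hV0
    have h := hmin V (by simp [hV0.ne_empty, hV])
    rw [div_le_div_iff₀ (by exact_mod_cast hU.1.card_pos) (by exact_mod_cast hV0.card_pos)] at h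
    exact_mod_cast h
  refine ⟨U, hU.2, hU.1, key X subset_rfl hX, fun V hV ↦ ?_⟩
  obtain rfl | hV0 := V.eq_empty_or_nonempty
  · simp
  · exact key V (hV.trans hU.2) hV0

/-- The Plünnecke inequality for two different summands. -/
theorem exists_subset_card_add_add_mul_sq_le {X : Finset G} (hX : X.Nonempty) (Y Z : Finset G) :
    ∃ U ⊆ X, U.Nonempty ∧ #(U + Y + Z) * #X ^ 2 ≤ 4 * (#(X + Y) * #(X + Z)) * #U := by
  obtain rfl | hY := Y.eq_empty_or_nonempty
  · exact ⟨X, subset_rfl, hX, by simp⟩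
  obtain rfl | hZ := Z.eq_empty_or_nonempty
  · exact ⟨X, subset_rfl, hX, by simp⟩
  set m := #(X + Z) with hm
  set n := #(X + Y) with hn
  have hm0 : 0 < m := (hX.add hZ).card_pos
  have hn0 : 0 < n := (hX.add hY).card_pos
  have : NeZero m := ⟨hm0.ne'⟩
  have : NeZero n := ⟨hn0.ne'⟩
  let T : Finset (G × ZMod m × ZMod n) :=
    Y ×ˢ ((univ : Finset (ZMod m)) ×ˢ ({0} : Finset (ZMod n))) ∪
      Z ×ˢ (({0} : Finset (ZMod m)) ×ˢ (univ : Finset (ZMod n)))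
  let ι : G → G × ZMod m × ZMod n := fun x ↦ (x, 0, 0)
  have hι : Function.Injective ι := fun x y h ↦ congrArg Prod.fst h
  obtain ⟨W, hWX, hW0, hWle, hWmin⟩ := exists_subset_minimizing_card_add (hX.image ι) T
  obtain ⟨U, hUX, rfl⟩ := subset_image_iff.1 hWX
  rw [card_image_of_injective _ hι, card_image_of_injective _ hι] at hWle
  refine ⟨U, by exact_mod_cast hUX, by simpa using hW0, ?_⟩
  have hU0 : 0 < #U := by simpa [card_pos] using hW0
  have hX0 : 0 < #X := hX.card_pos
  have h1 : #(X.image ι + T) ≤ 2 * (n * m) := by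
    have hsub : X.image ι + T ⊆ (X + Y) ×ˢ ((univ : Finset (ZMod m)) ×ˢ ({0} : Finset (ZMod n))) ∪
        (X + Z) ×ˢ (({0} : Finset (ZMod m)) ×ˢ (univ : Finset (ZMod n))) := by
      intro w hw
      obtain ⟨x, hx, t, ht, rfl⟩ := mem_add.1 hw
      obtain ⟨x, hxX, rfl⟩ := mem_image.1 hx
      simp only [T, mem_union, mem_product, mem_univ, mem_singleton, true_and, and_true] at ht
      simp only [ι, mem_union, mem_product, mem_univ, mem_singleton, true_and, and_true,
        Prod.fst_add, Prod.snd_add, zero_add]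
      exact ht.imp (fun h ↦ ⟨add_mem_add hxX h.1, h.2⟩) fun h ↦ ⟨add_mem_add hxX h.1, h.2⟩
    refine (card_le_card hsub).trans ((card_union_le _ _).trans ?_)
    simp only [card_product, card_univ, ZMod.card, card_singleton, mul_one, one_mul, ← hm, ← hn]
    linarith [mul_comm m n]
  have h2 : #(U + Y + Z) * (m * n) ≤ #(T + U.image ι + T) := by
    have hsub : (U + Y + Z) ×ˢ ((univ : Finset (ZMod m)) ×ˢ (univ : Finset (ZMod n))) ⊆
        T + U.image ι + T := by
      rintro ⟨w, h, k⟩ hw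
      simp only [mem_product, mem_univ, and_true] at hw
      obtain ⟨v, hv, z, hz, rfl⟩ := mem_add.1 hw
      obtain ⟨u, hu, y, hy, rfl⟩ := mem_add.1 hv
      refine mem_add.2 ⟨(y, h, 0) + ι u, add_mem_add (by simp [T, hy]) (mem_image_of_mem _ hu),
        (z, 0, k), by simp [T, hz], ?_⟩
      simp [ι, add_comm]
    simpa [card_product, ZMod.card] using card_le_card hsub
  have h3 := pluennecke_petridis_inequality_add T hWmin
  rw [card_image_of_injective _ hι, add_comm T] at h3
  rw [add_comm T] at h2
  set S := #(U + Y + Z)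
  set q := #(U.image ι + T)
  have h4 : q * #X ≤ 2 * (n * m) * #U := hWle.trans (by gcongr)
  have h5 : (S * #X ^ 2) * (m * n * #U) ≤ (4 * (n * m) * #U) * (m * n * #U) := by
    calc (S * #X ^ 2) * (m * n * #U) = (S * (m * n)) * #U * #X ^ 2 := by ring
      _ ≤ q * q * #X ^ 2 := Nat.mul_le_mul_right _ ((Nat.mul_le_mul_right _ h2).trans h3)
      _ = (q * #X) ^ 2 := by ring
      _ ≤ (2 * (n * m) * #U) ^ 2 := by gcongr
      _ = _ := by ring
  exact Nat.le_of_mul_le_mul_right h5 (by positivity)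

end Plunnecke

theorem sq_card_le_card_image_mul {α β : Type*} [DecidableEq β] (s : Finset α) (f : α → β) :
    #s ^ 2 ≤ #(s.image f) * #{x ∈ s ×ˢ s | f x.1 = f x.2} := by
  have h1 : #s = ∑ b ∈ s.image f, #{x ∈ s | f x = b} :=
    card_eq_sum_card_fiberwise fun x hx ↦ mem_coe.2 (mem_image_of_mem f hx)
  have h2 : #{x ∈ s ×ˢ s | f x.1 = f x.2} = ∑ b ∈ s.image f, #{x ∈ s | f x = b} ^ 2 := by
    rw [card_eq_sum_card_fiberwise (f := fun x ↦ f x.1) (t := s.image f)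
      fun x hx ↦ by simp at hx; simp; exact ⟨_, hx.1.1, rfl⟩]
    refine sum_congr rfl fun b _ ↦ ?_
    rw [sq, ← card_product]
    congr 1
    ext ⟨x, y⟩
    simp only [mem_filter, mem_product]
    grind
  rw [h2]
  nth_rw 1 [h1]
  exact sq_sum_le_card_mul_sum_sq

section Field
variable {F : Type*} [Field F] [DecidableEq F]

/-- Some dilate of `A` is almost independent of `A`. -/
theorem exists_min_le_card_add_smul [Fintype F] (A : Finset F) :
    ∃ ξ : F, min (#A ^ 2) (Fintype.card F) ≤ 2 * #(A + ξ • A) := by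
  obtain rfl | hA := A.eq_empty_or_nonempty
  · exact ⟨0, by simp⟩
  set q := Fintype.card F with hq
  set n := #A
  have hn : 0 < n := hA.card_pos
  have hq0 : 0 < q := Fintype.card_pos
  let E : F → ℕ := fun ξ ↦
    #{x ∈ (A ×ˢ A) ×ˢ (A ×ˢ A) | x.1.1 + ξ * x.1.2 = x.2.1 + ξ * x.2.2}
  have hsum : ∑ ξ, E ξ ≤ n ^ 4 + n ^ 2 * q := by
    calc ∑ ξ, E ξ = ∑ x ∈ (A ×ˢ A) ×ˢ (A ×ˢ A),
          #{ξ : F | x.1.1 + ξ * x.1.2 = x.2.1 + ξ * x.2.2} := by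
          simp only [E, card_filter]
          exact sum_comm
      _ ≤ ∑ x ∈ (A ×ˢ A) ×ˢ (A ×ˢ A), (1 + if x.1 = x.2 then q else 0) := by
          refine sum_le_sum fun x _ ↦ ?_
          split_ifs with h
          · exact (card_le_univ _).trans (by omega)
          · rw [add_zero, card_le_one]
            intro ξ hξ η hη
            simp only [mem_filter, mem_univ, true_and] at hξ hη
            by_contra hne
            have h2 : (ξ - η) * (x.1.2 - x.2.2) = 0 := by linear_combination hξ - hη
            rcases mul_eq_zero.1 h2 with h2 | h2
            · exact hne (sub_eq_zero.1 h2)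
            · refine h (Prod.ext ?_ (sub_eq_zero.1 h2))
              rw [sub_eq_zero.1 h2] at hξ
              exact add_right_cancel hξ
      _ = n ^ 4 + n ^ 2 * q := by
          rw [sum_add_distrib, sum_product (f := fun x ↦ if x.1 = x.2 then q else 0)]
          simp +contextual [card_product, n]
          ring
  obtain ⟨ξ, -, hξ⟩ := exists_le_of_sum_le (s := (univ : Finset F)) (f := fun ξ ↦ q * E ξ)
    (g := fun _ ↦ n ^ 4 + n ^ 2 * q) univ_nonempty (by
      rw [← mul_sum, sum_const, card_univ, smul_eq_mul, ← hq]; gcongr)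
  have hCS := sq_card_le_card_image_mul (A ×ˢ A) fun x : F × F ↦ x.1 + ξ * x.2
  have himg : (A ×ˢ A).image (fun x : F × F ↦ x.1 + ξ * x.2) = A + ξ • A := by
    ext y
    simp only [mem_image, mem_product, mem_add, mem_smul_finset, smul_eq_mul, Prod.exists]
    grind
  rw [himg, card_product] at hCS
  refine ⟨ξ, ?_⟩
  set S := #(A + ξ • A)
  change (n * n) ^ 2 ≤ S * E ξ at hCS
  have h1 : n ^ 2 * (n ^ 2 * q) ≤ n ^ 2 * (S * (n ^ 2 + q)) := by
    calc n ^ 2 * (n ^ 2 * q) = (n * n) ^ 2 * q := by ring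
      _ ≤ S * E ξ * q := by gcongr
      _ = S * (q * E ξ) := by ring
      _ ≤ S * (n ^ 4 + n ^ 2 * q) := by gcongr
      _ = _ := by ring
  have h2 := Nat.le_of_mul_le_mul_left h1 (by positivity)
  rcases le_total (n ^ 2) q with h | h
  · rw [min_eq_left h]
    refine Nat.le_of_mul_le_mul_right (h2.trans ?_) hq0
    nlinarith [Nat.mul_le_mul_left S h]
  · rw [min_eq_right h]
    refine Nat.le_of_mul_le_mul_left (h2.trans ?_) (show 0 < n ^ 2 by positivity)
    nlinarith [Nat.mul_le_mul_left S h]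

theorem card_smul_add_smul_mul_le (A B : Finset F) (a b : F) :
    #(a • A + b • A) * #(a • B ∩ b • B) ≤ #(A + B) ^ 2 := by
  refine (ruzsa_triangle_inequality_add_add_add _ _ _).trans ?_
  rw [sq]
  refine Nat.mul_le_mul ?_ ?_
  · refine (card_le_card ?_).trans (card_smul_finset_le (a := a))
    rw [smul_add]
    gcongr
    exact inter_subset_left
  · refine (card_le_card ?_).trans (card_smul_finset_le (a := b))
    rw [smul_add, add_comm]
    gcongr
    exact inter_subset_right

theorem card_neg_smul_add_smul_mul_le (A B : Finset F) (a b : F) :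
    #((-a) • A + b • A) * #(a • B ∩ b • B) ≤ #(A + B) ^ 2 := by
  have h : (-a) • A + b • A = b • A - a • A := by
    rw [sub_eq_add_neg, add_comm]
    congr 1
    ext x; simp [mem_smul_finset]
  rw [h]
  refine (ruzsa_triangle_inequality_sub_add_add _ _ _).trans ?_
  rw [sq]
  refine Nat.mul_le_mul ?_ ?_
  · refine (card_le_card ?_).trans (card_smul_finset_le (a := b))
    rw [smul_add]
    gcongr
    exact inter_subset_right
  · refine (card_le_card ?_).trans (card_smul_finset_le (a := a))
    rw [smul_add]
    gcongr
    exact inter_subset_left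

theorem card_sub_smul_add_sub_smul_le {A B S T : Finset F} {e : F} (he : e ≠ 0) {N : ℕ}
    (hS : S ⊆ A) (hT : T ⊆ A)
    (hN : ∀ a ∈ T, N ≤ #(a • B ∩ e • B)) {a b c d : F} (ha : a ∈ T) (hb : b ∈ T) (hc : c ∈ T)
    (hd : d ∈ T) :
    #((c - d) • S + (a - b) • S) * (N ^ 4 * #A ^ 3) ≤ 256 * #(A + B) ^ 8 := by
  obtain rfl | hA := A.eq_empty_or_nonempty
  · simp
  let Y := (a • A ∪ (-b) • A) ∪ (c • A ∪ (-d) • A)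
  have hXY : #(e • A + Y) * N ≤ 4 * #(A + B) ^ 2 := by
    have hpos : ∀ t ∈ T, #(e • A + t • A) * N ≤ #(A + B) ^ 2 := fun t ht ↦ by
      rw [add_comm]
      exact (Nat.mul_le_mul_left _ (hN t ht)).trans (card_smul_add_smul_mul_le A B t e)
    have hneg : ∀ t ∈ T, #(e • A + (-t) • A) * N ≤ #(A + B) ^ 2 := fun t ht ↦ by
      rw [add_comm]
      exact (Nat.mul_le_mul_left _ (hN t ht)).trans (card_neg_smul_add_smul_mul_le A B t e)
    have hU : #(e • A + Y) ≤ (#(e • A + a • A) + #(e • A + (-b) • A)) +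
        (#(e • A + c • A) + #(e • A + (-d) • A)) := by
      simp only [Y, add_union]
      exact (card_union_le _ _).trans (add_le_add (card_union_le _ _) (card_union_le _ _))
    calc _ ≤ _ * N := Nat.mul_le_mul_right _ hU
      _ ≤ _ := by linarith [hpos a ha, hpos c hc, hneg b hb, hneg d hd]
  have hsub : (c - d) • S + (a - b) • S ⊆ 4 • Y := by
    intro x hx
    obtain ⟨u, hu, v, hv, rfl⟩ := mem_add.1 hx
    obtain ⟨s, hs, rfl⟩ := mem_smul_finset.1 hu
    obtain ⟨t, ht, rfl⟩ := mem_smul_finset.1 hv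
    have h4 : (4 : ℕ) • Y = (Y + Y) + (Y + Y) := by
      rw [show 4 = 2 + 2 from rfl, add_smul, two_nsmul]
    rw [h4]
    have hmem : (c • s + (-d) • s) + (a • t + (-b) • t) ∈ (Y + Y) + (Y + Y) := by
      refine add_mem_add (add_mem_add ?_ ?_) (add_mem_add ?_ ?_) <;>
        simp only [Y, mem_union]
      · exact .inr (.inl (smul_mem_smul_finset (hS hs)))
      · exact .inr (.inr (smul_mem_smul_finset (hS hs)))
      · exact .inl (.inl (smul_mem_smul_finset (hS ht)))
      · exact .inl (.inr (smul_mem_smul_finset (hS ht)))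
    convert hmem using 1
    simp only [smul_eq_mul]
    ring
  have hPR := pluennecke_ruzsa_inequality_nsmul_add (hA.smul_finset (a := e)) Y 4
  rw [card_smul_finset₀ he] at hPR
  have hA0 : (0 : ℚ≥0) < #A := by exact_mod_cast hA.card_pos
  have hPR' : #(4 • Y) * #A ^ 3 ≤ #(e • A + Y) ^ 4 := by
    have h : (#(4 • Y) * #A ^ 3 : ℚ≥0) ≤ #(e • A + Y) ^ 4 := by
      calc _ ≤ (#(e • A + Y) / #A : ℚ≥0) ^ 4 * #A * #A ^ 3 := by gcongr
        _ = _ := by field_simp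
    exact_mod_cast h
  calc _ ≤ #(4 • Y) * (N ^ 4 * #A ^ 3) := by gcongr
    _ = #(4 • Y) * #A ^ 3 * N ^ 4 := by ring
    _ ≤ #(e • A + Y) ^ 4 * N ^ 4 := by gcongr
    _ = (#(e • A + Y) * N) ^ 4 := by ring
    _ ≤ (4 * #(A + B) ^ 2) ^ 4 := by gcongr
    _ = _ := by ring

theorem card_add_self_mul_le (S : Finset F) {A B : Finset F} (hS : S ⊆ A) :
    #(S + S) * #B ≤ #(A + B) ^ 2 := by
  refine (ruzsa_triangle_inequality_add_add_add _ _ _).trans ?_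
  rw [sq, add_comm B]
  gcongr

theorem card_mul_card_le_sq_card_add {A B : Finset F} (hA : A.Nonempty) (hB : B.Nonempty) :
    #A * #B ≤ #(A + B) ^ 2 := by
  rw [sq]
  exact Nat.mul_le_mul (card_le_card_add_right hB) (card_le_card_add_left hA)

end Field

section RatioSet
variable {p : ℕ} [Fact p.Prime]

theorem exists_mem_ratioSet_add_one_notMem {A : Finset (ZMod p)} (hA : 1 < #A)
    (h : ratioSet A ≠ Set.univ) : ∃ ξ ∈ ratioSet A, ξ + 1 ∉ ratioSet A := by
  by_contra! hcl
  refine h (Set.eq_univ_of_forall fun x ↦ ?_)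
  obtain ⟨a, ha, b, hb, hab⟩ := one_lt_card.1 hA
  have hnat : ∀ k : ℕ, (k : ZMod p) ∈ ratioSet A := by
    intro k
    induction k with
    | zero => exact ⟨a, ha, a, ha, a, ha, b, hb, hab, by simp⟩
    | succ k ih => exact_mod_cast hcl _ ih
  simpa using hnat x.val

theorem card_add_smul_of_notMem_ratioSet {A U V : Finset (ZMod p)} {ξ : ZMod p}
    (hξ : ξ ∉ ratioSet A) (hU : U ⊆ A) (hV : V ⊆ A) : #(U + ξ • V) = #U * #V := by
  have himg : U + ξ • V = (U ×ˢ V).image fun x ↦ x.1 + ξ * x.2 := by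
    ext y
    simp only [mem_image, mem_product, mem_add, mem_smul_finset, smul_eq_mul, Prod.exists]
    grind
  rw [himg, card_image_of_injOn, card_product]
  rintro ⟨a, c⟩ hx ⟨b, d⟩ hy hxy
  simp only [coe_product, Set.mem_prod, mem_coe] at hx hy hxy
  have hcd : c = d := by
    by_contra hcd
    refine hξ ⟨b, hU hy.1, a, hU hx.1, c, hV hx.2, d, hV hy.2, hcd, ?_⟩
    rw [eq_div_iff (sub_ne_zero.2 hcd)]
    linear_combination hxy
  subst hcd
  rw [add_right_cancel hxy]

theorem card_add_smul_mul_le_of_mem_ratioSet {A B T : Finset (ZMod p)} {e ξ : ZMod p}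
    (he : e ≠ 0) {N : ℕ} (hT : T ⊆ A) (hN : ∀ a ∈ T, N ≤ #(a • B ∩ e • B))
    (hξ : ξ ∈ ratioSet T) : #(T + ξ • T) * (N ^ 4 * #A ^ 3) ≤ 256 * #(A + B) ^ 8 := by
  obtain ⟨a, ha, b, hb, c, hc, d, hd, hcd, rfl⟩ := hξ
  have h0 : c - d ≠ 0 := sub_ne_zero.2 hcd
  have h := card_sub_smul_add_sub_smul_le he hT hT hN ha hb hc hd
  rwa [← mul_div_cancel₀ (a - b) h0, mul_smul, ← smul_add, card_smul_finset₀ h0] at h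

theorem min_sq_card_mul_le_of_ratioSet_eq_univ {A B T : Finset (ZMod p)} {e : ZMod p}
    (he : e ≠ 0) {N : ℕ} (hT : T ⊆ A) (hN : ∀ a ∈ T, N ≤ #(a • B ∩ e • B))
    (h : ratioSet T = Set.univ) :
    min (#T ^ 2) p * (N ^ 4 * #A ^ 3) ≤ 512 * #(A + B) ^ 8 := by
  obtain ⟨ξ, hξ⟩ := exists_min_le_card_add_smul T
  rw [ZMod.card] at hξ
  have h1 := card_add_smul_mul_le_of_mem_ratioSet (ξ := ξ) he hT hN (h ▸ Set.mem_univ ξ)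
  calc _ ≤ 2 * #(T + ξ • T) * (N ^ 4 * #A ^ 3) := by gcongr
    _ ≤ _ := by linarith

theorem card_pow_three_mul_le_of_ratioSet_ne_univ {A B T : Finset (ZMod p)} {e : ZMod p}
    (he : e ≠ 0) {N : ℕ} (hT : T ⊆ A) (hN : ∀ a ∈ T, N ≤ #(a • B ∩ e • B))
    (hT1 : 1 < #T) (h : ratioSet T ≠ Set.univ) :
    #T ^ 3 * (N ^ 4 * #A ^ 3 * #B) ≤ 1024 * #(A + B) ^ 10 := by
  obtain ⟨ξ, hξ, hξ'⟩ := exists_mem_ratioSet_add_one_notMem hT1 h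
  have hT0 : T.Nonempty := card_pos.1 (by omega)
  obtain ⟨U, hUT, hU, hle⟩ := exists_subset_card_add_add_mul_sq_le hT0 T (ξ • T)
  have hsub : U + (ξ + 1) • T ⊆ U + T + ξ • T := by
    rw [add_assoc]
    gcongr
    intro x hx
    obtain ⟨t, ht, rfl⟩ := mem_smul_finset.1 hx
    rw [add_smul, one_smul, add_comm (ξ • t)]
    exact add_mem_add ht (smul_mem_smul_finset ht)
  have h1 : #T ^ 3 ≤ 4 * (#(T + T) * #(T + ξ • T)) := by
    refine Nat.le_of_mul_le_mul_right ?_ hU.card_pos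
    calc #T ^ 3 * #U = #U * #T * #T ^ 2 := by ring
      _ = #(U + (ξ + 1) • T) * #T ^ 2 := by
        rw [card_add_smul_of_notMem_ratioSet hξ' hUT subset_rfl]
      _ ≤ #(U + T + ξ • T) * #T ^ 2 := by gcongr
      _ ≤ _ := hle
  have h2 := card_add_smul_mul_le_of_mem_ratioSet he hT hN hξ
  calc _ ≤ 4 * (#(T + T) * #(T + ξ • T)) * (N ^ 4 * #A ^ 3 * #B) := by gcongr
    _ = 4 * (#(T + T) * #B) * (#(T + ξ • T) * (N ^ 4 * #A ^ 3)) := by ring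
    _ ≤ 4 * #(A + B) ^ 2 * (256 * #(A + B) ^ 8) := by
      gcongr
      exact card_add_self_mul_le T hT
    _ = _ := by ring

theorem card_pow_three_mul_le {A B T : Finset (ZMod p)} {e : ZMod p}
    (he : e ≠ 0) {N : ℕ} (hT : T ⊆ A) (hN : ∀ a ∈ T, N ≤ #(a • B ∩ e • B))
    (hp : #T ^ 2 ≤ p) : #T ^ 3 * (N ^ 4 * #A ^ 3 * #B) ≤ 1024 * #(A + B) ^ 10 := by
  obtain rfl | hT0 := T.eq_empty_or_nonempty
  · simp
  obtain rfl | hB := B.eq_empty_or_nonempty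
  · simp
  have hA : A.Nonempty := hT0.mono hT
  by_cases h : ratioSet T = Set.univ
  · have h1 := min_sq_card_mul_le_of_ratioSet_eq_univ he hT hN h
    rw [min_eq_left hp] at h1
    calc _ = #T ^ 2 * (N ^ 4 * #A ^ 3) * (#T * #B) := by ring
      _ ≤ 512 * #(A + B) ^ 8 * #(A + B) ^ 2 := by
        gcongr
        exact (Nat.mul_le_mul_right _ (card_le_card hT)).trans (card_mul_card_le_sq_card_add hA hB)
      _ ≤ _ := by rw [mul_assoc, ← pow_add]; gcongr; norm_num
  obtain hT1 | hT1 := lt_or_ge 1 #T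
  · exact card_pow_three_mul_le_of_ratioSet_ne_univ he hT hN hT1 h
  · obtain ⟨a, ha⟩ := hT0
    have hNB : N ≤ #(A + B) := (hN a ha).trans <| (card_le_card inter_subset_left).trans <|
      card_smul_finset_le.trans (card_le_card_add_left hA)
    have hAK : #A ≤ #(A + B) := card_le_card_add_right hB
    have hBK : #B ≤ #(A + B) := card_le_card_add_left hA
    have hK : 1 ≤ #(A + B) := (hA.add hB).card_pos
    calc _ ≤ 1 ^ 3 * (#(A + B) ^ 4 * #(A + B) ^ 3 * #(A + B)) := by gcongr
      _ = #(A + B) ^ 8 := by ring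
      _ ≤ #(A + B) ^ 10 := Nat.pow_le_pow_right hK (by norm_num)
      _ ≤ _ := by omega

end RatioSet

theorem dyadic_piece_bounds :
    ∃ C : ℝ, 0 < C ∧ ∀ (p : ℕ) [Fact p.Prime], ∀ A B : Finset (ZMod p),
      A.Nonempty → B.Nonempty → ∀ a₀ ∈ A,
      (A.card : ℝ) * (B.card : ℝ) ^ 2 / ((A * B).card : ℝ) ≤
        (∑ a ∈ A, ((B.image (a * ·)) ∩ (B.image (a₀ * ·))).card : ℝ) →
      ∀ j : ℕ, 1 ≤ j → j ≤ Nat.clog 2 B.card →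
      ∀ Aj : Finset (ZMod p),
        Aj = (A.filter fun a =>
          2 ^ (j - 1) < ((B.image (a * ·)) ∩ (B.image (a₀ * ·))).card ∧
          ((B.image (a * ·)) ∩ (B.image (a₀ * ·))).card ≤ 2 ^ j) →
        ((Aj.card : ℝ) ≤ Real.sqrt p →
          (16 : ℝ) ^ j * (Aj.card : ℝ) ^ 3 ≤
            C * ((A + B).card : ℝ) ^ 10 / ((A.card : ℝ) ^ 3 * (B.card : ℝ))) ∧
        (ratioSet Aj = Set.univ →
          (16 : ℝ) ^ j * min ((Aj.card : ℝ) ^ 2) (p : ℝ) ≤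
            C * ((A + B).card : ℝ) ^ 8 / (A.card : ℝ) ^ 3) := by
  refine ⟨16384, by norm_num, ?_⟩
  intro p _ A B hA hB a₀ ha₀ _ j hj _ T hT
  have hTA : T ⊆ A := hT ▸ filter_subset _ _
  have hN : ∀ a ∈ T, 2 ^ (j - 1) < #(a • B ∩ a₀ • B) := fun a ha ↦ by
    rw [hT] at ha
    exact (mem_filter.1 ha).2.1
  have hA0 : (0 : ℝ) < #A := by exact_mod_cast hA.card_pos
  have hB0 : (0 : ℝ) < #B := by exact_mod_cast hB.card_pos
  have h16 : (16 : ℝ) ^ j = 16 * ((2 : ℝ) ^ (j - 1)) ^ 4 := by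
    obtain ⟨k, rfl⟩ := Nat.exists_eq_add_of_le' hj
    rw [Nat.add_sub_cancel, ← pow_mul, mul_comm k, pow_mul, pow_succ]
    norm_num [mul_comm]
  obtain rfl | ⟨a, ha⟩ := T.eq_empty_or_nonempty
  · refine ⟨fun _ ↦ ?_, fun _ ↦ ?_⟩
    · simp only [card_empty, Nat.cast_zero]
      rw [zero_pow (by norm_num), mul_zero]
      positivity
    · simp only [card_empty, Nat.cast_zero]
      rw [zero_pow (by norm_num), min_eq_left (Nat.cast_nonneg p), mul_zero]
      positivity
  have he : a₀ ≠ 0 := by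
    rintro rfl
    have h1 := (hN a ha).trans_le (card_le_card inter_subset_right)
    rw [zero_smul_finset hB, card_zero] at h1
    have := Nat.one_le_two_pow (n := j - 1)
    omega
  have hN' : ∀ a ∈ T, 2 ^ (j - 1) ≤ #(a • B ∩ a₀ • B) := fun a ha ↦ (hN a ha).le
  refine ⟨fun hp ↦ ?_, fun hR ↦ ?_⟩
  · have hp' : #T ^ 2 ≤ p := by
      rw [Real.le_sqrt (by positivity) (by positivity)] at hp
      exact_mod_cast hp
    have h : (#T ^ 3 * ((2 ^ (j - 1)) ^ 4 * #A ^ 3 * #B) : ℝ) ≤ 1024 * #(A + B) ^ 10 := by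
      exact_mod_cast card_pow_three_mul_le he hTA hN' hp'
    rw [le_div_iff₀ (by positivity), h16]
    linarith
  · have h : (min ((#T : ℝ) ^ 2) (p : ℝ) * ((2 ^ (j - 1)) ^ 4 * #A ^ 3) : ℝ) ≤
        512 * #(A + B) ^ 8 := by
      exact_mod_cast min_sq_card_mul_le_of_ratioSet_eq_univ he hTA hN' hR
    have hK : (0 : ℝ) ≤ (#(A + B) : ℝ) ^ 8 := by positivity
    rw [le_div_iff₀ (by positivity), h16]
    linarith
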